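/- arXiv:2211.09629 — 7 statements merged into one kernel-verified Lean document; each statement's English description precedes it below -/
import Mathlib

section
/- Let a₁, b₁, a₂, b₂, a₃, b₃ be real numbers and let P(X) = X³ + (a₁+ib₁)X² + (a₂+ib₂)X + (a₃+ib₃) be a cubic polynomial with complex coefficients. Then all three roots of P have strictly positive imaginary part if and only if the following three conditions hold: −Δ₂ > 0, Δ₄ > 0 and −Δ₆ > 0, where Δ₂ = det [[1, a₁],[0, b₁]], Δ₄ = det [[1, a₁, a₂, a₃],[0, b₁, b₂, b₃],[0, 1, a₁, a₂],[0, 0, b₁, b₂]], and Δ₆ = det [[1, a₁, a₂, a₃, 0, 0],[0, b₁, b₂, b₃, 0, 0],[0, 1, a₁, a₂, a₃, 0],[0, 0, b₁, b₂, b₃, 0],[0, 0, 1, a₁, a₂, a₃],[0, 0, 0, b₁, b₂, b₃]]. -/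
open Polynomial

lemma rh_factor (c1 c2 c3 : ℂ) : ∃ z1 z2 z3 : ℂ,
    c1 = -(z1 + z2 + z3) ∧ c2 = z1 * z2 + z1 * z3 + z2 * z3 ∧ c3 = -(z1 * z2 * z3) := by
  obtain ⟨z1, h1⟩ := IsAlgClosed.exists_root (X ^ 3 + C c1 * X ^ 2 + C c2 * X + C c3 : ℂ[X])
    (by
      have : (X ^ 3 + C c1 * X ^ 2 + C c2 * X + C c3 : ℂ[X]).degree = 3 := by compute_degree!
      rw [this]; norm_num)
  obtain ⟨z2, h2⟩ := IsAlgClosed.exists_root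
    (X ^ 2 + C (c1 + z1) * X + C (c2 + z1 * (c1 + z1)) : ℂ[X])
    (by
      have : (X ^ 2 + C (c1 + z1) * X + C (c2 + z1 * (c1 + z1)) : ℂ[X]).degree = 2 := by
        compute_degree!
      rw [this]; norm_num)
  simp only [IsRoot.def, eval_add, eval_mul, eval_pow, eval_X, eval_C] at h1 h2
  refine ⟨z1, z2, -(c1 + z1 + z2), by ring, ?_, ?_⟩
  · linear_combination h2
  · linear_combination h1 - z1 * h2

/-- The second Hermite minor in terms of the roots. -/
def rhD (x y z u v w : ℝ) : ℝ :=
  u * v * ((x - y) ^ 2 + (u + v) ^ 2) + v * w * ((y - z) ^ 2 + (v + w) ^ 2)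
    + u * w * ((x - z) ^ 2 + (u + 2 * v + w) ^ 2)

lemma rh_neg (x y z p v q : ℝ) (hp : 0 < p) (hq : 0 < q) (hs : 0 < v - p - q) :
    rhD x y z (-p) v (-q) ≤ 0 := by
  obtain ⟨s, rfl⟩ : ∃ s, v = s + p + q := ⟨v - p - q, by ring⟩
  have hs : 0 < s := by linarith
  have : rhD x y z (-p) (s + p + q) (-q) = -((p * (x - y) + q * (z - y)) ^ 2
      + s * p * (x - y) ^ 2 + s * q * (z - y) ^ 2
      + s * (p * q * (p + q)) + s ^ 2 * (p + q) ^ 2 + s ^ 3 * (p + q)) := by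
    unfold rhD; ring
  rw [this, neg_nonpos]; positivity

lemma rh_core (x y z u v w : ℝ) (h2 : 0 < u + v + w) (h4 : 0 < rhD x y z u v w)
    (h6 : 0 < u * v * w) : 0 < u ∧ 0 < v ∧ 0 < w := by
  have key : ∀ x y z u v w : ℝ, 0 < u + v + w → 0 < rhD x y z u v w → u < 0 → w < 0 → False := by
    intro x y z u v w h2 h4 hu hw
    have := rh_neg x y z (-u) v (-w) (by linarith) (by linarith) (by linarith)
    rw [neg_neg, neg_neg] at this
    linarith
  have e1 : rhD x y z u v w = rhD y x z v u w := by unfold rhD; ring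
  have e2 : rhD x y z u v w = rhD x z y u w v := by unfold rhD; ring
  have hu : u ≠ 0 := by rintro rfl; simp at h6
  have hv : v ≠ 0 := by rintro rfl; simp at h6
  have hw : w ≠ 0 := by rintro rfl; simp at h6
  rcases lt_or_gt_of_ne hu with hu | hu <;> rcases lt_or_gt_of_ne hv with hv | hv <;>
    rcases lt_or_gt_of_ne hw with hw | hw
  · exact (key x y z u v w h2 h4 hu hw).elim
  · exact (key x z y u w v (by linarith) (e2 ▸ h4) hu hv).elim
  · exact (key x y z u v w h2 h4 hu hw).elim
  · exact absurd h6 (not_lt.2 (mul_nonpos_of_nonpos_of_nonneg (mul_nonpos_of_nonpos_of_nonneg hu.le hv.le) hw.le))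
  · exact (key y x z v u w (by linarith) (e1 ▸ h4) hv hw).elim
  · exact absurd h6 (not_lt.2 (mul_nonpos_of_nonpos_of_nonneg (mul_nonpos_of_nonneg_of_nonpos hu.le hv.le) hw.le))
  · exact absurd h6 (not_lt.2 (mul_nonpos_of_nonneg_of_nonpos (mul_nonneg hu.le hv.le) hw.le))
  · exact ⟨hu, hv, hw⟩

lemma rh_det4 (a₁ b₁ a₂ b₂ a₃ b₃ : ℝ) : Matrix.det !![(1 : ℝ), a₁, a₂, a₃;
                          0, b₁, b₂, b₃;
                          0, 1, a₁, a₂;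
                          0, 0, b₁, b₂] = b₁ * (a₁ * b₂ - a₂ * b₁) - (b₂ * b₂ - b₃ * b₁) := by
  simp [Matrix.det_succ_column_zero, Fin.sum_univ_succ, Fin.succAbove]
  ring

lemma rh_det6 (a₁ b₁ a₂ b₂ a₃ b₃ : ℝ) : Matrix.det !![(1 : ℝ), a₁, a₂, a₃, 0, 0;
                           0, b₁, b₂, b₃, 0, 0;
                           0, 1, a₁, a₂, a₃, 0;
                           0, 0, b₁, b₂, b₃, 0;
                           0, 0, 1, a₁, a₂, a₃;
                           0, 0, 0, b₁, b₂, b₃] =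
    b₁ * a₁ * b₂ * a₂ * b₃ - b₁ * a₁ * b₂ ^ 2 * a₃ - b₁ * a₁ ^ 2 * b₃ ^ 2 - b₁ * b₂ * b₃ * a₃ * 3
      + b₁ * a₂ * b₃ ^ 2 * 2 + b₁ ^ 2 * a₁ * b₃ * a₃ * 2 + b₁ ^ 2 * b₂ * a₂ * a₃
      - b₁ ^ 2 * a₂ ^ 2 * b₃ - b₁ ^ 3 * a₃ ^ 2 + a₁ * b₂ * b₃ ^ 2 - b₂ ^ 2 * a₂ * b₃
      + b₂ ^ 3 * a₃ - b₃ ^ 3 := by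
  simp [Matrix.det_succ_column_zero, Fin.sum_univ_succ, Fin.succAbove]
  ring

lemma rh_congr {A B D A' B' D' : ℝ} (h1 : A = A') (h2 : B = B') (h3 : D = D') :
    (0 < A ∧ 0 < B ∧ 0 < D) ↔ (0 < A' ∧ 0 < B' ∧ 0 < D') := by
  rw [h1, h2, h3]

/-- **Routh–Hurwitz criterion** for monic cubic polynomials with complex
coefficients: all three roots of
`P(X) = X³ + (a₁+ib₁)X² + (a₂+ib₂)X + (a₃+ib₃)` have strictly positive
imaginary part if and only if `−Δ₂ > 0`, `Δ₄ > 0` and `−Δ₆ > 0`. -/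
theorem routh_hurwitz_cubic (a₁ b₁ a₂ b₂ a₃ b₃ : ℝ) :
    (∀ z : ℂ,
        (X ^ 3 + C ((a₁ : ℂ) + (b₁ : ℂ) * Complex.I) * X ^ 2
            + C ((a₂ : ℂ) + (b₂ : ℂ) * Complex.I) * X
            + C ((a₃ : ℂ) + (b₃ : ℂ) * Complex.I)).IsRoot z → 0 < z.im) ↔
      (0 < -Matrix.det !![(1 : ℝ), a₁; 0, b₁] ∧
        0 < Matrix.det !![(1 : ℝ), a₁, a₂, a₃;
                          0, b₁, b₂, b₃;
                          0, 1, a₁, a₂;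
                          0, 0, b₁, b₂] ∧
        0 < -Matrix.det !![(1 : ℝ), a₁, a₂, a₃, 0, 0;
                           0, b₁, b₂, b₃, 0, 0;
                           0, 1, a₁, a₂, a₃, 0;
                           0, 0, b₁, b₂, b₃, 0;
                           0, 0, 1, a₁, a₂, a₃;
                           0, 0, 0, b₁, b₂, b₃]) := by
  obtain ⟨z1, z2, z3, e1, e2, e3⟩ := rh_factor ((a₁ : ℂ) + (b₁ : ℂ) * Complex.I)
    ((a₂ : ℂ) + (b₂ : ℂ) * Complex.I) ((a₃ : ℂ) + (b₃ : ℂ) * Complex.I)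
  have hL : (∀ z : ℂ,
        (X ^ 3 + C ((a₁ : ℂ) + (b₁ : ℂ) * Complex.I) * X ^ 2
            + C ((a₂ : ℂ) + (b₂ : ℂ) * Complex.I) * X
            + C ((a₃ : ℂ) + (b₃ : ℂ) * Complex.I)).IsRoot z → 0 < z.im) ↔
      (0 < z1.im ∧ 0 < z2.im ∧ 0 < z3.im) := by
    have hz : ∀ z : ℂ, (X ^ 3 + C ((a₁ : ℂ) + (b₁ : ℂ) * Complex.I) * X ^ 2
            + C ((a₂ : ℂ) + (b₂ : ℂ) * Complex.I) * X
            + C ((a₃ : ℂ) + (b₃ : ℂ) * Complex.I)).IsRoot z ↔ (z = z1 ∨ z = z2 ∨ z = z3) := by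
      intro z
      rw [e1, e2, e3]
      simp only [IsRoot.def, eval_add, eval_mul, eval_pow, eval_X, eval_C]
      have : z ^ 3 + -(z1 + z2 + z3) * z ^ 2 + (z1 * z2 + z1 * z3 + z2 * z3) * z
          + -(z1 * z2 * z3) = (z - z1) * ((z - z2) * (z - z3)) := by ring
      rw [this, mul_eq_zero, mul_eq_zero, sub_eq_zero, sub_eq_zero, sub_eq_zero]
    simp only [hz]
    constructor
    · intro h
      exact ⟨h _ (Or.inl rfl), h _ (Or.inr (Or.inl rfl)), h _ (Or.inr (Or.inr rfl))⟩
    · rintro ⟨h1, h2, h3⟩ z (rfl | rfl | rfl) <;> assumption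
  rw [hL, rh_det4, rh_det6, Matrix.det_fin_two_of]
  clear hL
  obtain ⟨x, u⟩ := z1
  obtain ⟨y, v⟩ := z2
  obtain ⟨z, w⟩ := z3
  have r1 := congrArg Complex.re e1
  have i1 := congrArg Complex.im e1
  have r2 := congrArg Complex.re e2
  have i2 := congrArg Complex.im e2
  have r3 := congrArg Complex.re e3
  have i3 := congrArg Complex.im e3
  simp at r1 i1 r2 i2 r3 i3
  clear e1 e2 e3
  subst r1 i1 r2 i2 r3 i3
  refine Iff.trans (?_ : _ ↔ 0 < u + v + w ∧ 0 < rhD x y z u v w ∧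
    0 < u * v * w * (((x - y) ^ 2 + (u + v) ^ 2) * ((x - z) ^ 2 + (u + w) ^ 2)
      * ((y - z) ^ 2 + (v + w) ^ 2))) (rh_congr (by ring) (by unfold rhD; ring) (by ring))
  constructor
  · rintro ⟨hu, hv, hw⟩
    change 0 < u at hu
    change 0 < v at hv
    change 0 < w at hw
    refine ⟨by positivity, by unfold rhD; positivity, by positivity⟩
  · rintro ⟨h2, h4, h6⟩
    exact rh_core x y z u v w h2 h4 (pos_of_mul_pos_left h6 (by positivity))
end

section
/- Fix positive reals α, h̄, c̄, ρ̄_s, s, e, m, T = tanθ, and assume the creeping constant K is strictly positive. Then there exists a constant γ > 0, depending on these parameters but independent of n, such that for every n > 0: the linearized system (with exponent n in the matrix A) is spectrally stable at every frequency (ξ,η) ∈ ℝ² \ {(0,0)} if and only if K ≥ α m h̄ c̄ / ρ̄_s and n < γ. -/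
/-- The Fourier symbol `A(ξ,η) = A₀ + iξ·A₁ − (ξ²+η²)·A₂` of the linearized
landscape evolution system about the constant state `(h̄, c̄, 0)`, with
`a = s·ρ̄ₛ/(e·h̄)` and slope parameter `T = tan θ`. -/
noncomputable def landA (α hb cb ρs s e m n T K : ℝ) (ξ η : ℝ) :
    Matrix (Fin 3) (Fin 3) ℂ :=
  ((!![0, 0, 0;
       (s * ρs / (e * hb)) * m * cb / hb, -(s * ρs / (e * hb)), 0;
       -((s * ρs / (e * hb)) * m * cb / ρs), (s * ρs / (e * hb)) * hb / ρs, 0] :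
      Matrix (Fin 3) (Fin 3) ℝ).map Complex.ofReal)
  + (Complex.I * (ξ : ℂ)) •
    ((!![-T, 0, 0;
         -(α * (s * ρs / (e * hb)) * n * cb / T), -T,
           -(α * (s * ρs / (e * hb)) * n * cb / T);
         α * (s * ρs / (e * hb)) * n * hb * cb / (ρs * T), 0,
           α * (s * ρs / (e * hb)) * n * hb * cb / (ρs * T)] :
        Matrix (Fin 3) (Fin 3) ℝ).map Complex.ofReal)
  - (((ξ ^ 2 + η ^ 2 : ℝ) : ℂ)) •
    ((!![α * hb, 0, α * hb; 0, 0, 0; 0, 0, K] :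
        Matrix (Fin 3) (Fin 3) ℝ).map Complex.ofReal)

/-- Spectral stability: every eigenvalue (root of the characteristic
polynomial) has strictly negative real part. -/
def SpectrallyStable (A : Matrix (Fin 3) (Fin 3) ℂ) : Prop :=
  ∀ z : ℂ, A.charpoly.IsRoot z → z.re < 0

/-- The shifted characteristic polynomial. -/
noncomputable def lePP (H a K D T b q ξ : ℝ) (z : ℂ) : ℂ :=
  (z + q * H) * (z + a) * (z + q * K - Complex.I * ξ * T) - Complex.I * ξ * b * z ^ 2
    - q * H * D * z

lemma le_charpoly (α hb cb ρs s e m n T K ξ η : ℝ)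
    (hhb : 0 < hb) (hρs : 0 < ρs) (he : 0 < e) (hT : 0 < T) (z : ℂ) :
    (landA α hb cb ρs s e m n T K ξ η).charpoly.IsRoot z ↔
      lePP (α * hb) (s * ρs / (e * hb)) K ((s * ρs / (e * hb)) * m * cb / ρs) T
        (α * (s * ρs / (e * hb)) * n * cb * hb / (T * ρs)) (ξ ^ 2 + η ^ 2) ξ
        (z + Complex.I * ξ * T) = 0 := by
  have h1 : (hb : ℂ) ≠ 0 := by exact_mod_cast hhb.ne'
  have h2 : (ρs : ℂ) ≠ 0 := by exact_mod_cast hρs.ne'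
  have h3 : (e : ℂ) ≠ 0 := by exact_mod_cast he.ne'
  have h4 : (T : ℂ) ≠ 0 := by exact_mod_cast hT.ne'
  have key : Polynomial.eval z (landA α hb cb ρs s e m n T K ξ η).charpoly =
      lePP (α * hb) (s * ρs / (e * hb)) K ((s * ρs / (e * hb)) * m * cb / ρs) T
        (α * (s * ρs / (e * hb)) * n * cb * hb / (T * ρs)) (ξ ^ 2 + η ^ 2) ξ
        (z + Complex.I * ξ * T) := by
    rw [Matrix.eval_charpoly, Matrix.det_fin_three]
    simp [landA, lePP]
    field_simp
    ring
  rw [Polynomial.IsRoot.def, key]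

lemma le_factor (c2 c1 c0 : ℂ) : ∃ r1 r2 r3 : ℂ,
    c2 = -(r1 + r2 + r3) ∧ c1 = r1 * r2 + r1 * r3 + r2 * r3 ∧ c0 = -(r1 * r2 * r3) := by
  obtain ⟨r, hr⟩ : ∃ r : ℂ, r ^ 3 + c2 * r ^ 2 + c1 * r + c0 = 0 := by
    have hd : (Polynomial.C 1 * Polynomial.X ^ 3 + Polynomial.C c2 * Polynomial.X ^ 2
      + Polynomial.C c1 * Polynomial.X + Polynomial.C c0 : Polynomial ℂ).degree = 3 :=
      Polynomial.degree_cubic one_ne_zero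
    obtain ⟨r, hr⟩ := IsAlgClosed.exists_root _ (by rw [hd]; norm_num)
    refine ⟨r, ?_⟩
    simpa [Polynomial.IsRoot.def] using hr
  obtain ⟨w, hw⟩ := IsAlgClosed.exists_eq_mul_self ((c2 + r) ^ 2 - 4 * (c1 + (c2 + r) * r))
  refine ⟨r, (-(c2 + r) + w) / 2, (-(c2 + r) - w) / 2, by ring, ?_, ?_⟩
  · linear_combination (-1 / 4 : ℂ) * hw
  · linear_combination hr + r * (1 / 4 : ℂ) * hw

lemma le_homotopy (c2 c1 c0 : ℝ → ℂ) (h2 : Continuous c2) (h1 : Continuous c1)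
    (h0 : Continuous c0)
    (hst : ∀ z : ℂ, z ^ 3 + c2 0 * z ^ 2 + c1 0 * z + c0 0 = 0 → z.re < 0)
    (hno : ∀ t ∈ Set.Icc (0 : ℝ) 1, ∀ z : ℂ,
      z ^ 3 + c2 t * z ^ 2 + c1 t * z + c0 t = 0 → z.re ≠ 0) :
    ∀ z : ℂ, z ^ 3 + c2 1 * z ^ 2 + c1 1 * z + c0 1 = 0 → z.re < 0 := by
  set U : Set ℝ := {t | ∃ z : ℂ, z ^ 3 + c2 t * z ^ 2 + c1 t * z + c0 t = 0 ∧ 0 < z.re} with hU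
  have hUo : IsOpen U := by
    rw [isOpen_iff_mem_nhds]
    rintro t0 ⟨z, hz, hzr⟩
    have hc : Continuous fun t => ‖z ^ 3 + c2 t * z ^ 2 + c1 t * z + c0 t‖ := by fun_prop
    have hlt : ‖z ^ 3 + c2 t0 * z ^ 2 + c1 t0 * z + c0 t0‖ < z.re ^ 3 := by
      rw [hz, norm_zero]; positivity
    filter_upwards [hc.continuousAt.eventually_lt continuousAt_const hlt] with t ht
    obtain ⟨r1, r2, r3, e2, e1, e0⟩ := le_factor (c2 t) (c1 t) (c0 t)
    by_contra hcon
    have hre : ∀ r : ℂ, r ^ 3 + c2 t * r ^ 2 + c1 t * r + c0 t = 0 → z.re ≤ ‖z - r‖ := by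
      intro r hr
      have : r.re ≤ 0 := by
        by_contra h
        exact hcon ⟨r, hr, not_le.mp h⟩
      have h' := Complex.re_le_norm (z - r)
      simp at h'
      linarith
    have g1 := hre r1 (by rw [e2, e1, e0]; ring)
    have g2 := hre r2 (by rw [e2, e1, e0]; ring)
    have g3 := hre r3 (by rw [e2, e1, e0]; ring)
    have e : z ^ 3 + c2 t * z ^ 2 + c1 t * z + c0 t = (z - r1) * (z - r2) * (z - r3) := by
      rw [e2, e1, e0]; ring
    rw [e, norm_mul, norm_mul] at ht
    have : z.re ^ 3 ≤ ‖z - r1‖ * ‖z - r2‖ * ‖z - r3‖ := by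
      calc z.re ^ 3 = z.re * z.re * z.re := by ring
        _ ≤ _ := by gcongr
    linarith
  obtain ⟨R, hR⟩ : ∃ R : ℝ, ∀ t ∈ Set.Icc (0 : ℝ) 1, ‖c2 t‖ + ‖c1 t‖ + ‖c0 t‖ ≤ R := by
    have hc : Continuous fun t => ‖c2 t‖ + ‖c1 t‖ + ‖c0 t‖ := by fun_prop
    obtain ⟨R, hR⟩ := (isCompact_Icc (a := (0 : ℝ)) (b := 1)).bddAbove_image hc.continuousOn
    exact ⟨R, fun t ht => hR (Set.mem_image_of_mem _ ht)⟩
  set C : Set (ℝ × ℂ) := (Set.Icc (0 : ℝ) 1 ×ˢ Metric.closedBall (0 : ℂ) (max 1 R)) ∩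
    {x | x.2 ^ 3 + c2 x.1 * x.2 ^ 2 + c1 x.1 * x.2 + c0 x.1 = 0 ∧ 0 ≤ x.2.re} with hC
  have hCc : IsCompact C := by
    refine (isCompact_Icc.prod (isCompact_closedBall _ _)).inter_right ?_
    refine IsClosed.inter (isClosed_eq (by fun_prop) continuous_const)
      (isClosed_le continuous_const (Complex.continuous_re.comp continuous_snd))
  have hVo : IsOpen (Prod.fst '' C)ᶜ := (hCc.image continuous_fst).isClosed.isOpen_compl
  have hbd : ∀ t ∈ Set.Icc (0 : ℝ) 1, ∀ z : ℂ, z ^ 3 + c2 t * z ^ 2 + c1 t * z + c0 t = 0 →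
      ‖z‖ ≤ max 1 R := by
    intro t ht z hz
    by_contra h
    push Not at h
    have hz1 : 1 < ‖z‖ := lt_of_le_of_lt (le_max_left _ _) h
    have hz2 : R < ‖z‖ := lt_of_le_of_lt (le_max_right _ _) h
    have e : z ^ 3 = -(c2 t * z ^ 2 + c1 t * z + c0 t) := by linear_combination hz
    have e' : ‖z‖ ^ 3 ≤ ‖c2 t‖ * ‖z‖ ^ 2 + ‖c1 t‖ * ‖z‖ + ‖c0 t‖ := by
      rw [← norm_pow, e, norm_neg]
      refine (norm_add_le _ _).trans ?_
      gcongr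
      refine (norm_add_le _ _).trans ?_
      rw [norm_mul, norm_mul, norm_pow]
    have hR' := hR t ht
    have n1 := norm_nonneg (c1 t)
    have n0 := norm_nonneg (c0 t)
    have i1 : ‖c1 t‖ * ‖z‖ ≤ ‖c1 t‖ * ‖z‖ ^ 2 := by gcongr; nlinarith
    have i0 : ‖c0 t‖ ≤ ‖c0 t‖ * ‖z‖ ^ 2 := by nlinarith [mul_nonneg n0 (by nlinarith : 0 ≤ ‖z‖ ^ 2 - 1)]
    have i2 : (‖c2 t‖ + ‖c1 t‖ + ‖c0 t‖) * ‖z‖ ^ 2 ≤ R * ‖z‖ ^ 2 := by gcongr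
    have i3 : R * ‖z‖ ^ 2 < ‖z‖ * ‖z‖ ^ 2 := by gcongr
    nlinarith
  intro z hz
  by_contra hzr
  push Not at hzr
  have hz1 : (1 : ℝ) ∈ U := ⟨z, hz, lt_of_le_of_ne hzr (Ne.symm (hno 1 (by simp) z hz))⟩
  have hz0 : (0 : ℝ) ∈ (Prod.fst '' C)ᶜ := by
    rintro ⟨⟨t, w⟩, ⟨-, hw, hw'⟩, rfl⟩
    exact absurd (hst w hw) (not_lt.mpr hw')
  obtain ⟨t, ht, ⟨w, hw, hw'⟩, htV⟩ := isPreconnected_Icc (a := (0 : ℝ)) (b := 1) U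
    (Prod.fst '' C)ᶜ hUo hVo (by
      intro t ht
      by_cases h : t ∈ Prod.fst '' C
      · left
        obtain ⟨⟨t', w⟩, ⟨-, hw, hw'⟩, rfl⟩ := h
        exact ⟨w, hw, lt_of_le_of_ne hw' (Ne.symm (hno _ ht w hw))⟩
      · exact Or.inr h) ⟨1, by simp, hz1⟩ ⟨0, by simp, hz0⟩
  exact htV ⟨(t, w), ⟨⟨ht, by simpa using hbd t ht w hw⟩, hw, hw'.le⟩, rfl⟩

/-- Marginal points (`W = ω²`). -/
def leMarg (H a K D T b q W : ℝ) : Prop :=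
  0 < q ∧ 0 < W ∧
  b * W * (q * K * (q * H * a - W) - W * (q * H + a)) =
    T * q * (W * (K * (q * H + a) - H * D) * (q * H + a) + K * (q * H * a - W) ^ 2) ∧
  (q * K * (q * H * a - W) - W * (q * H + a)) ^ 2 ≤ T ^ 2 * (q * H + a) ^ 2 * (q * W)

lemma le_expand (H a K D T b q ξ : ℝ) (z : ℂ) : lePP H a K D T b q ξ z =
    z ^ 3 + (q * H + a + q * K - Complex.I * ξ * T - Complex.I * ξ * b) * z ^ 2 +
    (q * H * a + (q * H + a) * (q * K - Complex.I * ξ * T) - q * H * D) * z +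
    q * H * a * (q * K - Complex.I * ξ * T) := by
  unfold lePP; ring

lemma le_imag (H a K D T b q ξ ω : ℝ) : lePP H a K D T b q ξ (Complex.I * ω) = 0 ↔
    ((q * H * a - ω ^ 2) * (q * K) - ω * (q * H + a) * (ω - ξ * T) = 0 ∧
     ω * (q * H + a) * (q * K) + (q * H * a - ω ^ 2) * (ω - ξ * T) + ξ * b * ω ^ 2
      - ω * q * H * D = 0) := by
  have : lePP H a K D T b q ξ (Complex.I * ω) =
    (((q * H * a - ω ^ 2) * (q * K) - ω * (q * H + a) * (ω - ξ * T) : ℝ) : ℂ) +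
    ((ω * (q * H + a) * (q * K) + (q * H * a - ω ^ 2) * (ω - ξ * T) + ξ * b * ω ^ 2
      - ω * q * H * D : ℝ) : ℂ) * Complex.I := by
    unfold lePP
    push_cast
    have hI : Complex.I ^ 2 = -1 := Complex.I_sq
    have hI3 : Complex.I ^ 3 = -Complex.I := Complex.I_pow_three
    ring_nf
    simp only [hI, hI3]
    ring
  rw [this, Complex.ext_iff]
  simp only [Complex.add_re, Complex.add_im, Complex.ofReal_re, Complex.ofReal_im,
    Complex.re_ofReal_mul, Complex.im_ofReal_mul, Complex.I_re, Complex.I_im, mul_zero, mul_one,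
    add_zero, zero_add, Complex.zero_re, Complex.zero_im]

lemma le_marg_of_imag (H a K D T b q ξ ω : ℝ) (hH : 0 < H) (ha : 0 < a) (hK : 0 < K)
    (hq : 0 < q) (hξ : ξ ^ 2 ≤ q)
    (h : lePP H a K D T b q ξ (Complex.I * ω) = 0) : leMarg H a K D T b q (ω ^ 2) := by
  rw [le_imag] at h
  obtain ⟨h1, h2⟩ := h
  have hω : ω ≠ 0 := by
    rintro rfl
    have : q * H * a * (q * K) = 0 := by linarith
    have : 0 < q * H * a * (q * K) := by positivity
    linarith
  have hX : q * K * (q * H * a - ω ^ 2) - ω ^ 2 * (q * H + a) = -(ξ * ω) * T * (q * H + a) := by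
    linear_combination h1
  refine ⟨hq, by positivity, ?_, ?_⟩
  · rw [hX]
    linear_combination (-T * (q * H + a) * ω) * h2 + (-T * (q * H * a - ω ^ 2)) * h1
  · rw [hX]
    have : (-(ξ * ω) * T * (q * H + a)) ^ 2 = T ^ 2 * (q * H + a) ^ 2 * (ξ ^ 2 * ω ^ 2) := by ring
    rw [this]
    gcongr

lemma le_imag_of_marg (H a K D T b q W : ℝ) (hH : 0 < H) (ha : 0 < a) (hT : 0 < T)
    (h : leMarg H a K D T b q W) : ∃ ξ ω : ℝ, ξ ^ 2 ≤ q ∧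
      lePP H a K D T b q ξ (Complex.I * ω) = 0 := by
  obtain ⟨hq, hW, h1, h2⟩ := h
  obtain ⟨ω, hω, rfl⟩ : ∃ ω : ℝ, 0 < ω ∧ W = ω ^ 2 :=
    ⟨√W, Real.sqrt_pos.mpr hW, (Real.sq_sqrt hW.le).symm⟩
  have hL : 0 < q * H + a := by positivity
  obtain ⟨ξ, hξ⟩ : ∃ ξ : ℝ, q * K * (q * H * a - ω ^ 2) - ω ^ 2 * (q * H + a) =
      -(ξ * ω) * T * (q * H + a) :=
    ⟨-(q * K * (q * H * a - ω ^ 2) - ω ^ 2 * (q * H + a)) / (ω * T * (q * H + a)), by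
      field_simp⟩
  refine ⟨ξ, ω, ?_, ?_⟩
  · rw [hξ] at h2
    have : (-(ξ * ω) * T * (q * H + a)) ^ 2 = (T ^ 2 * (q * H + a) ^ 2 * ω ^ 2) * ξ ^ 2 := by ring
    rw [this] at h2
    have h3 : (T ^ 2 * (q * H + a) ^ 2 * ω ^ 2) * ξ ^ 2 ≤ (T ^ 2 * (q * H + a) ^ 2 * ω ^ 2) * q := by
      linarith
    exact le_of_mul_le_mul_left h3 (by positivity)
  · rw [le_imag]
    have e1 : (q * H * a - ω ^ 2) * (q * K) - ω * (q * H + a) * (ω - ξ * T) = 0 := by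
      linear_combination hξ
    refine ⟨e1, ?_⟩
    rw [hξ] at h1
    have h3 : (T * (q * H + a) * ω) * (ω * (q * H + a) * (q * K) +
        (q * H * a - ω ^ 2) * (ω - ξ * T) + ξ * b * ω ^ 2 - ω * q * H * D) = 0 := by
      linear_combination -h1 - T * (q * H * a - ω ^ 2) * e1
    have h4 : T * (q * H + a) * ω ≠ 0 := by positivity
    exact (mul_eq_zero.mp h3).resolve_left h4

lemma le_stable_zero (H a K D q : ℝ) (hH : 0 < H) (ha : 0 < a) (hK : 0 < K) (hD : 0 < D)
    (hq : 0 < q) (hKD : H * D ≤ a * K) (z : ℂ)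
    (h : (z + q * H) * (z + a) * (z + q * K) - q * H * D * z = 0) : z.re < 0 := by
  by_contra hz
  push Not at hz
  have hn : ∀ x : ℝ, 0 < x → ‖z‖ < ‖z + x‖ ∧ x ≤ ‖z + x‖ := by
    intro x hx
    constructor
    · rw [Complex.norm_def, Complex.norm_def]
      apply Real.sqrt_lt_sqrt (Complex.normSq_nonneg _)
      simp [Complex.normSq_apply]
      nlinarith
    · have := Complex.re_le_norm (z + x)
      simp at this
      linarith
  have e : ‖z + (q * H : ℝ)‖ * ‖z + (a : ℝ)‖ * ‖z + (q * K : ℝ)‖ = q * H * D * ‖z‖ := by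
    have : (z + (q * H : ℝ)) * (z + (a : ℝ)) * (z + (q * K : ℝ)) = ((q * H * D : ℝ) : ℂ) * z := by
      push_cast
      linear_combination h
    rw [← norm_mul, ← norm_mul, this, norm_mul, Complex.norm_real, Real.norm_of_nonneg (by positivity)]
  obtain ⟨f1, -⟩ := hn (q * H) (by positivity)
  obtain ⟨-, f2⟩ := hn a ha
  obtain ⟨-, f3⟩ := hn (q * K) (by positivity)
  have hz0 := norm_nonneg z
  have g1 : ‖z + (q * H : ℝ)‖ * a * (q * K) ≤
      ‖z + (q * H : ℝ)‖ * ‖z + (a : ℝ)‖ * ‖z + (q * K : ℝ)‖ := by gcongr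
  have g2 : ‖z‖ * a * (q * K) < ‖z + (q * H : ℝ)‖ * a * (q * K) := by gcongr
  have g3 : (H * D) * (q * ‖z‖) ≤ (a * K) * (q * ‖z‖) := by gcongr
  linarith

lemma le_stable_of_no_marg (H a K D T b : ℝ) (hH : 0 < H) (ha : 0 < a) (hK : 0 < K)
    (hD : 0 < D) (hKD : H * D ≤ a * K) (hno : ∀ q W, ¬ leMarg H a K D T b q W)
    (q ξ : ℝ) (hq : 0 < q) (hξ : ξ ^ 2 ≤ q) (z : ℂ) (hz : lePP H a K D T b q ξ z = 0) :
    z.re < 0 := by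
  refine le_homotopy
    (fun t => (q * H + a + q * K - Complex.I * (t * ξ : ℝ) * T - Complex.I * (t * ξ : ℝ) * b))
    (fun t => (q * H * a + (q * H + a) * (q * K - Complex.I * (t * ξ : ℝ) * T) - q * H * D))
    (fun t => q * H * a * (q * K - Complex.I * (t * ξ : ℝ) * T))
    (by fun_prop) (by fun_prop) (by fun_prop) ?_ ?_ z ?_
  · intro w hw
    refine le_stable_zero H a K D q hH ha hK hD hq hKD w ?_
    rw [← hw]
    push_cast
    ring
  · intro t ht w hw hw0
    rw [← le_expand] at hw
    have hwI : w = Complex.I * (w.im : ℝ) := by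
      apply Complex.ext <;> simp [hw0]
    rw [hwI] at hw
    refine hno q (w.im ^ 2) (le_marg_of_imag H a K D T b q (t * ξ) w.im hH ha hK hq ?_ hw)
    have h1 : t ^ 2 ≤ 1 := by nlinarith [ht.1, ht.2]
    nlinarith [sq_nonneg ξ]
  · rw [← hz, le_expand]
    simp

lemma le_marg_bounds (H a K D T b q W : ℝ) (hH : 0 < H) (ha : 0 < a) (hK : 0 < K)
    (hT : 0 < T) (hb : 0 < b) (hKD : H * D ≤ a * K) (h : leMarg H a K D T b q W) :
    T * (q * H + a) ≤ b * a ∧ T * a ≤ K * (b + T) * q ∧ T * q * H * a ≤ (b + T) * W ∧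
      W ≤ q * H * a := by
  obtain ⟨hq, hW, h1, -⟩ := h
  set L := q * H + a with hLd
  have hL : 0 < L := by positivity
  have haL : a ≤ L := by rw [hLd]; nlinarith [mul_pos hq hH]
  set A := q * H * a - W with hA
  have hKL : K * (q * H) ≤ K * L - H * D := by rw [hLd]; linarith
  have hKL' : 0 < K * L - H * D := lt_of_lt_of_le (by positivity) hKL
  have hy : 0 < q * K * A - W * L := by
    have : 0 < b * W * (q * K * A - W * L) := by rw [h1]; positivity
    exact pos_of_mul_pos_right this (by positivity)
  have hWL : 0 < W * L := by positivity
  have hA0 : 0 < A := by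
    have : 0 < q * K * A := by linarith
    exact pos_of_mul_pos_right this (by positivity)
  have hA1 : A ≤ q * H * a := by linarith
  -- third bound
  have b3 : T * A ≤ b * W := by
    have i1 : b * W * (q * K * A - W * L) ≤ b * W * (q * K * A) := by
      gcongr; linarith
    have i2 : T * q * (K * A ^ 2) ≤ b * W * (q * K * A - W * L) := by
      rw [h1]
      gcongr
      have : 0 < W * (K * L - H * D) * L := by positivity
      linarith
    have i3 : (q * K * A) * (T * A) ≤ (q * K * A) * (b * W) := by nlinarith
    exact le_of_mul_le_mul_left i3 (by positivity)
  have b3' : T * q * H * a ≤ (b + T) * W := by rw [hA] at b3; linarith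
  refine ⟨?_, ?_, b3', by linarith⟩
  · have i2 : T * q * (W * (K * (q * H)) * L) ≤ b * W * (q * K * A - W * L) := by
      rw [h1]
      gcongr
      have : W * (K * (q * H)) * L ≤ W * (K * L - H * D) * L := by gcongr
      have : 0 ≤ K * A ^ 2 := by positivity
      linarith
    have i1 : b * W * (q * K * A - W * L) ≤ b * W * (q * K * (q * H * a)) := by
      gcongr
      have : q * K * A ≤ q * K * (q * H * a) := by gcongr
      linarith
    have i3 : (q * q * W * K * H) * (T * L) ≤ (q * q * W * K * H) * (b * a) := by linarith
    exact le_of_mul_le_mul_left i3 (by positivity)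
  · have j1 : W * a ≤ q * K * (q * H * a) := by
      have : W * a ≤ W * L := by gcongr
      have : q * K * A ≤ q * K * (q * H * a) := by gcongr
      linarith
    have j2 : W ≤ q * K * (q * H) := by
      have : a * W ≤ a * (q * K * (q * H)) := by linarith
      exact le_of_mul_le_mul_left this ha
    have j3 : (b + T) * W ≤ (b + T) * (q * K * (q * H)) := by gcongr
    have j4 : (q * H) * (T * a) ≤ (q * H) * (K * (b + T) * q) := by linarith
    exact le_of_mul_le_mul_left j4 (by positivity)

lemma le_marg_up (H a K D T b b0 q W0 : ℝ) (hH : 0 < H) (ha : 0 < a) (hK : 0 < K)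
    (hT : 0 < T) (hb0 : 0 < b0) (hbb : b0 ≤ b) (hKD : H * D ≤ a * K)
    (h : leMarg H a K D T b0 q W0) : ∃ W, leMarg H a K D T b q W := by
  obtain ⟨hq, hW, h1, h2⟩ := h
  have hKL : 0 < K * (q * H + a) - H * D := by
    have : 0 < K * (q * H) := by positivity
    linarith
  have hy : 0 < q * K * (q * H * a - W0) - W0 * (q * H + a) := by
    have : 0 < b0 * W0 * (q * K * (q * H * a - W0) - W0 * (q * H + a)) := by rw [h1]; positivity
    exact pos_of_mul_pos_right this (by positivity)
  set f : ℝ → ℝ := fun W => b * W * (q * K * (q * H * a - W) - W * (q * H + a)) -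
    T * q * (W * (K * (q * H + a) - H * D) * (q * H + a) + K * (q * H * a - W) ^ 2) with hf
  have hL : 0 < q * K + (q * H + a) := by positivity
  set W1 := q * K * (q * H * a) / (q * K + (q * H + a)) with hW1
  have hW1e : W1 * (q * K + (q * H + a)) = q * K * (q * H * a) := by
    rw [hW1]; field_simp
  have hle : W0 ≤ W1 := by
    rw [hW1, le_div_iff₀ hL]; linarith
  have hW1p : 0 < W1 := lt_of_lt_of_le hW hle
  have hfc : ContinuousOn f (Set.Icc W0 W1) := by
    apply Continuous.continuousOn; fun_prop
  have f0 : 0 ≤ f W0 := by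
    have : f W0 = (b - b0) * W0 * (q * K * (q * H * a - W0) - W0 * (q * H + a)) := by
      simp only [hf]; linear_combination h1
    rw [this]
    have : 0 ≤ b - b0 := by linarith
    positivity
  have f1 : f W1 ≤ 0 := by
    have e : q * K * (q * H * a - W1) - W1 * (q * H + a) = 0 := by linear_combination -hW1e
    simp only [hf]
    rw [e]
    have : 0 ≤ T * q * (W1 * (K * (q * H + a) - H * D) * (q * H + a) + K * (q * H * a - W1) ^ 2) := by
      positivity
    linarith
  obtain ⟨W, ⟨hWa, hWb⟩, hWf⟩ := intermediate_value_Icc' hle hfc ⟨f1, f0⟩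
  have hWp : 0 < W := lt_of_lt_of_le hW hWa
  refine ⟨W, hq, hWp, by simp only [hf] at hWf; linarith, ?_⟩
  have y0 : 0 ≤ q * K * (q * H * a - W) - W * (q * H + a) := by
    have : W * (q * K + (q * H + a)) ≤ W1 * (q * K + (q * H + a)) := by gcongr
    linarith
  have y1 : q * K * (q * H * a - W) - W * (q * H + a) ≤
      q * K * (q * H * a - W0) - W0 * (q * H + a) := by
    have : W0 * (q * K + (q * H + a)) ≤ W * (q * K + (q * H + a)) := by gcongr
    linarith
  calc _ ≤ (q * K * (q * H * a - W0) - W0 * (q * H + a)) ^ 2 := by gcongr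
    _ ≤ _ := h2
    _ ≤ _ := by gcongr

lemma le_marg_exists (H a K D T : ℝ) (hH : 0 < H) (ha : 0 < a) (hK : 0 < K)
    (hT : 0 < T) (hKD : H * D ≤ a * K) : ∃ b q W, 0 < b ∧ leMarg H a K D T b q W := by
  have hL : 0 < K + (H + a) := by positivity
  set W1 := K * (H * a) / (K + (H + a)) with hW1
  have hW1e : W1 * (K + (H + a)) = K * (H * a) := by
    rw [hW1]; field_simp
  have hW1p : 0 < W1 := by positivity
  set g : ℝ → ℝ := fun W => (1 * K * (1 * H * a - W) - W * (1 * H + a)) ^ 2 -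
    T ^ 2 * (1 * H + a) ^ 2 * (1 * W) with hg
  have hgc : ContinuousOn g (Set.Icc 0 W1) := by
    apply Continuous.continuousOn; fun_prop
  have e1 : 1 * K * (1 * H * a - W1) - W1 * (1 * H + a) = 0 := by linear_combination -hW1e
  have g1 : g W1 < 0 := by
    simp only [hg]
    rw [e1]
    have : 0 < T ^ 2 * (1 * H + a) ^ 2 * (1 * W1) := by positivity
    linarith
  have g0 : 0 < g 0 := by
    have : g 0 = (K * (H * a)) ^ 2 := by simp only [hg]; ring
    rw [this]; positivity
  obtain ⟨W, ⟨hWa, hWb⟩, hWg⟩ := intermediate_value_Icc' hW1p.le hgc ⟨g1.le, g0.le⟩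
  have hWp : 0 < W := by
    rcases hWa.lt_or_eq with h | h
    · exact h
    · rw [← h] at hWg; linarith
  have hy2 : (1 * K * (1 * H * a - W) - W * (1 * H + a)) ^ 2 =
    T ^ 2 * (1 * H + a) ^ 2 * (1 * W) := by simp only [hg] at hWg; linarith
  have hy0 : 0 ≤ 1 * K * (1 * H * a - W) - W * (1 * H + a) := by
    have : W * (K + (H + a)) ≤ W1 * (K + (H + a)) := by gcongr
    linarith
  have hy : 0 < 1 * K * (1 * H * a - W) - W * (1 * H + a) := by
    rcases hy0.lt_or_eq with h | h
    · exact h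
    · rw [← h] at hy2
      have : 0 < T ^ 2 * (1 * H + a) ^ 2 * (1 * W) := by positivity
      linarith
  have hKL : 0 < K * (1 * H + a) - H * D := by
    have : 0 < K * H := by positivity
    linarith
  refine ⟨T * 1 * (W * (K * (1 * H + a) - H * D) * (1 * H + a) + K * (1 * H * a - W) ^ 2) /
    (W * (1 * K * (1 * H * a - W) - W * (1 * H + a))), 1, W, by positivity, one_pos, hWp, ?_,
    hy2.le⟩
  rw [mul_assoc, div_mul_cancel₀]
  positivity

lemma le_threshold (H a K D T : ℝ) (hH : 0 < H) (ha : 0 < a) (hK : 0 < K)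
    (hT : 0 < T) (hKD : H * D ≤ a * K) : ∃ γ : ℝ, 0 < γ ∧ ∀ b, 0 < b →
      ((∀ q W, ¬ leMarg H a K D T b q W) ↔ b < γ) := by
  obtain ⟨B, qB, WB, hB, hMB⟩ := le_marg_exists H a K D T hH ha hK hT hKD
  set q1 := T * a / (K * (B + T)) with hq1
  set q2 := B * a / (T * H) with hq2
  set W1 := T * q1 * H * a / (B + T) with hW1
  set W2 := q2 * H * a with hW2
  have hq1p : 0 < q1 := by positivity
  have hW1p : 0 < W1 := by positivity
  have hbox : ∀ b q W, 0 < b → b ≤ B → leMarg H a K D T b q W →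
      q ∈ Set.Icc q1 q2 ∧ W ∈ Set.Icc W1 W2 := by
    intro b q W hb hbB hM
    obtain ⟨c1, c2, c3, c4⟩ := le_marg_bounds H a K D T b q W hH ha hK hT hb hKD hM
    obtain ⟨hq, hW, -, -⟩ := hM
    have d1 : q1 ≤ q := by
      rw [hq1, div_le_iff₀ (by positivity)]
      have : K * (b + T) * q ≤ K * (B + T) * q := by gcongr
      linarith
    have d2 : q ≤ q2 := by
      rw [hq2, le_div_iff₀ (by positivity)]
      have : b * a ≤ B * a := by gcongr
      have : 0 < T * a := by positivity
      linarith
    refine ⟨⟨d1, d2⟩, ?_, ?_⟩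
    · rw [hW1, div_le_iff₀ (by positivity)]
      have : (b + T) * W ≤ (B + T) * W := by gcongr
      have : T * q1 * H * a ≤ T * q * H * a := by gcongr
      linarith
    · rw [hW2]
      have : q * H * a ≤ q2 * H * a := by gcongr
      linarith
  set C : Set (ℝ × ℝ × ℝ) := (Set.Icc T B ×ˢ Set.Icc q1 q2 ×ˢ Set.Icc W1 W2) ∩
    {x | x.1 * x.2.2 * (x.2.1 * K * (x.2.1 * H * a - x.2.2) - x.2.2 * (x.2.1 * H + a)) =
      T * x.2.1 * (x.2.2 * (K * (x.2.1 * H + a) - H * D) * (x.2.1 * H + a)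
        + K * (x.2.1 * H * a - x.2.2) ^ 2) ∧
      (x.2.1 * K * (x.2.1 * H * a - x.2.2) - x.2.2 * (x.2.1 * H + a)) ^ 2 ≤
        T ^ 2 * (x.2.1 * H + a) ^ 2 * (x.2.1 * x.2.2)} with hC
  have hTb : ∀ b q W, 0 < b → leMarg H a K D T b q W → T ≤ b := by
    intro b q W hb hM
    obtain ⟨c1, -⟩ := le_marg_bounds H a K D T b q W hH ha hK hT hb hKD hM
    have hq := hM.1
    have : 0 < T * (q * H) := by positivity
    have : T * a ≤ b * a := by linarith
    exact le_of_mul_le_mul_right this ha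
  have hmem : ∀ b q W, 0 < b → b ≤ B → leMarg H a K D T b q W → (b, q, W) ∈ C := by
    intro b q W hb hbB hM
    obtain ⟨m1, m2⟩ := hbox b q W hb hbB hM
    exact ⟨⟨⟨hTb b q W hb hM, hbB⟩, m1, m2⟩, hM.2.2.1, hM.2.2.2⟩
  have hCc : IsCompact C := by
    refine (isCompact_Icc.prod (isCompact_Icc.prod isCompact_Icc)).inter_right ?_
    rw [Set.setOf_and]
    exact IsClosed.inter (isClosed_eq (by fun_prop) (by fun_prop))
      (isClosed_le (by fun_prop) (by fun_prop))
  obtain ⟨⟨γ, q0, W0⟩, hx, hmin⟩ := hCc.exists_isMinOn ⟨_, hmem B qB WB hB le_rfl hMB⟩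
    (f := Prod.fst) continuous_fst.continuousOn
  obtain ⟨⟨⟨k1, k2⟩, ⟨k3, k4⟩, k5, k6⟩, k7, k8⟩ := hx
  simp only at k1 k2 k3 k4 k5 k6 k7 k8
  have hM0 : leMarg H a K D T γ q0 W0 :=
    ⟨by linarith, by linarith, k7, k8⟩
  have hγ : 0 < γ := by linarith
  refine ⟨γ, hγ, fun b hb => ⟨fun h => ?_, fun h q W hM => ?_⟩⟩
  · by_contra hc
    push Not at hc
    obtain ⟨W, hW⟩ := le_marg_up H a K D T b γ q0 W0 hH ha hK hT hγ hc hKD hM0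
    exact h q0 W hW
  · have := hmin (hmem b q W hb (by linarith) hM)
    simp at this
    linarith

lemma le_unstable (H a K D T b : ℝ) (hH : 0 < H) (ha : 0 < a) (hK : 0 < K)
    (hT : 0 < T) (hb : 0 < b) (hKD : a * K < H * D) : ∃ q ξ : ℝ, 0 < q ∧ ξ ^ 2 ≤ q ∧
      ¬ ∀ z : ℂ, lePP H a K D T b q ξ z = 0 → z.re < 0 := by
  obtain ⟨M, hM1, hM⟩ : ∃ M : ℝ, 1 ≤ M ∧ b * T < M * (H * D - a * K) := by
    have hd : 0 < H * D - a * K := by linarith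
    refine ⟨1 + b * T / (H * D - a * K), ?_, ?_⟩
    · have : 0 < b * T / (H * D - a * K) := by positivity
      linarith
    · rw [add_mul, div_mul_cancel₀ _ hd.ne']; linarith
  let u : ℝ → ℂ := fun ξ => (Complex.I * ξ * T + a) * M * ξ * K
    + (Complex.I * T + M * ξ * H) * M * ξ ^ 2 * K
    + (Complex.I * T + M * ξ * H) * (Complex.I * ξ * T + a) + 2 * ξ * b * T - M * ξ * H * D
  let v : ℝ → ℂ := fun ξ => (Complex.I * T + M * ξ * H) * (Complex.I * ξ * T + a) * M * K
    + Complex.I * b * T ^ 2 - Complex.I * M * H * D * T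
  have hF : Continuous fun ξ => (u ξ * (starRingEnd ℂ) (v ξ)).re := by
    have hu : Continuous u := by fun_prop
    have hv : Continuous v := by fun_prop
    exact Complex.continuous_re.comp (hu.mul (Complex.continuous_conj.comp hv))
  have hF0 : (u 0 * (starRingEnd ℂ) (v 0)).re < 0 := by
    have : (u 0 * (starRingEnd ℂ) (v 0)).re = T ^ 2 * a * (b * T - M * (H * D - a * K)) := by
      simp [u, v, pow_two]
      ring
    rw [this]
    apply mul_neg_of_pos_of_neg (by positivity)
    linarith
  have hev := hF.continuousAt.eventually_lt (continuousAt_const (y := (0 : ℝ))) hF0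
  obtain ⟨ξ, hξF, hξ⟩ : ∃ ξ : ℝ, (u ξ * (starRingEnd ℂ) (v ξ)).re < 0 ∧ 0 < ξ := by
    have h1 := hev.filter_mono (nhdsWithin_le_nhds (s := Set.Ioi (0 : ℝ)))
    exact (h1.and self_mem_nhdsWithin).exists
  refine ⟨M * ξ ^ 2, ξ, by positivity, by nlinarith [sq_nonneg ξ], fun hst => ?_⟩
  simp only [le_expand] at hst
  obtain ⟨r1, r2, r3, e2, e1, e0⟩ := le_factor
    (((M * ξ ^ 2 : ℝ) : ℂ) * H + a + ((M * ξ ^ 2 : ℝ) : ℂ) * K - Complex.I * ξ * T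
      - Complex.I * ξ * b)
    (((M * ξ ^ 2 : ℝ) : ℂ) * H * a + (((M * ξ ^ 2 : ℝ) : ℂ) * H + a) *
      (((M * ξ ^ 2 : ℝ) : ℂ) * K - Complex.I * ξ * T) - ((M * ξ ^ 2 : ℝ) : ℂ) * H * D)
    (((M * ξ ^ 2 : ℝ) : ℂ) * H * a * (((M * ξ ^ 2 : ℝ) : ℂ) * K - Complex.I * ξ * T))
  have s1 := hst r1 (by rw [e2, e1, e0]; ring)
  have s2 := hst r2 (by rw [e2, e1, e0]; ring)
  have s3 := hst r3 (by rw [e2, e1, e0]; ring)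
  set z : ℂ := Complex.I * ξ * T with hz
  have hzre : z.re = 0 := by simp [hz]
  obtain ⟨d1, hd1⟩ : ∃ d, d = z - r1 := ⟨_, rfl⟩
  obtain ⟨d2, hd2⟩ : ∃ d, d = z - r2 := ⟨_, rfl⟩
  obtain ⟨d3, hd3⟩ : ∃ d, d = z - r3 := ⟨_, rfl⟩
  have t1 : 0 < d1.re := by rw [hd1]; simp [hzre, s1]
  have t2 : 0 < d2.re := by rw [hd2]; simp [hzre, s2]
  have t3 : 0 < d3.re := by rw [hd3]; simp [hzre, s3]
  have hv : (ξ : ℂ) ^ 3 * v ξ = d1 * d2 * d3 := by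
    have : d1 * d2 * d3 = z ^ 3 + (-(r1 + r2 + r3)) * z ^ 2 + (r1 * r2 + r1 * r3 + r2 * r3) * z
      + (-(r1 * r2 * r3)) := by rw [hd1, hd2, hd3]; ring
    rw [this, ← e2, ← e1, ← e0]
    simp only [v, hz]
    push_cast
    have hI : Complex.I ^ 2 = -1 := Complex.I_sq
    have hI3 : Complex.I ^ 3 = -Complex.I := Complex.I_pow_three
    ring_nf
    simp only [hI, hI3]
    ring
  have hu : (ξ : ℂ) * u ξ = d1 * d2 + d1 * d3 + d2 * d3 := by
    have : d1 * d2 + d1 * d3 + d2 * d3 = 3 * z ^ 2 + 2 * (-(r1 + r2 + r3)) * z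
      + (r1 * r2 + r1 * r3 + r2 * r3) := by rw [hd1, hd2, hd3]; ring
    rw [this, ← e2, ← e1]
    simp only [u, hz]
    push_cast
    have hI : Complex.I ^ 2 = -1 := Complex.I_sq
    ring_nf
    simp only [hI]
    ring
  have hprod : ξ ^ 4 * (u ξ * (starRingEnd ℂ) (v ξ)).re =
      ((d1 * d2 + d1 * d3 + d2 * d3) * (starRingEnd ℂ) (d1 * d2 * d3)).re := by
    rw [← hv, ← hu]
    have : (ξ : ℂ) * u ξ * (starRingEnd ℂ) ((ξ : ℂ) ^ 3 * v ξ) =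
        ((ξ ^ 4 : ℝ) : ℂ) * (u ξ * (starRingEnd ℂ) (v ξ)) := by
      simp only [map_mul, map_pow, Complex.conj_ofReal]
      push_cast
      ring
    rw [this, Complex.re_ofReal_mul]
  have hpos : ((d1 * d2 + d1 * d3 + d2 * d3) * (starRingEnd ℂ) (d1 * d2 * d3)).re =
      (d1.re ^ 2 + d1.im ^ 2) * (d2.re ^ 2 + d2.im ^ 2) * d3.re +
      (d1.re ^ 2 + d1.im ^ 2) * (d3.re ^ 2 + d3.im ^ 2) * d2.re +
      (d2.re ^ 2 + d2.im ^ 2) * (d3.re ^ 2 + d3.im ^ 2) * d1.re := by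
    simp
    ring
  have hneg : ξ ^ 4 * (u ξ * (starRingEnd ℂ) (v ξ)).re < 0 :=
    mul_neg_of_pos_of_neg (by positivity) hξF
  rw [hprod, hpos] at hneg
  have : 0 < (d1.re ^ 2 + d1.im ^ 2) * (d2.re ^ 2 + d2.im ^ 2) * d3.re +
      (d1.re ^ 2 + d1.im ^ 2) * (d3.re ^ 2 + d3.im ^ 2) * d2.re +
      (d2.re ^ 2 + d2.im ^ 2) * (d3.re ^ 2 + d3.im ^ 2) * d1.re := by positivity
  linarith

lemma le_core (H a K D T : ℝ) (hH : 0 < H) (ha : 0 < a) (hK : 0 < K) (hD : 0 < D)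
    (hT : 0 < T) : ∃ γ : ℝ, 0 < γ ∧ ∀ b, 0 < b →
      ((∀ q ξ : ℝ, 0 < q → ξ ^ 2 ≤ q → ∀ z : ℂ, lePP H a K D T b q ξ z = 0 → z.re < 0) ↔
        (H * D ≤ a * K ∧ b < γ)) := by
  by_cases hKD : H * D ≤ a * K
  · obtain ⟨γ, hγ, h⟩ := le_threshold H a K D T hH ha hK hT hKD
    refine ⟨γ, hγ, fun b hb => ⟨fun hs => ⟨hKD, ?_⟩, fun hs => ?_⟩⟩
    · rw [← h b hb]
      intro q W hM
      obtain ⟨ξ, ω, h1, h2⟩ := le_imag_of_marg H a K D T b q W hH ha hT hM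
      have := hs q ξ hM.1 h1 _ h2
      simp at this
    · exact le_stable_of_no_marg H a K D T b hH ha hK hD hKD ((h b hb).mpr hs.2)
  · refine ⟨1, one_pos, fun b hb => ⟨fun hs => ?_, fun hs => absurd hs.1 hKD⟩⟩
    obtain ⟨q, ξ, h1, h2, h3⟩ := le_unstable H a K D T b hH ha hK hT hb (not_le.mp hKD)
    exact absurd (hs q ξ h1 h2) h3


/-- For `K > 0` there is a constant `γ > 0`, independent of `n`, such that the
linearized system with exponent `n` is spectrally stable at every nonzero
frequency iff `K ≥ α m h̄ c̄ / ρ̄ₛ` and `n < γ`. -/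
theorem spectral_stability_creep_pos (α hb cb ρs s e m T K : ℝ)
    (hα : 0 < α) (hhb : 0 < hb) (hcb : 0 < cb) (hρs : 0 < ρs)
    (hs : 0 < s) (he : 0 < e) (hm : 0 < m) (hT : 0 < T) (hK : 0 < K) :
    ∃ γ : ℝ, 0 < γ ∧ ∀ n : ℝ, 0 < n →
      ((∀ ξ η : ℝ, (ξ, η) ≠ (0, 0) →
          SpectrallyStable (landA α hb cb ρs s e m n T K ξ η)) ↔
        (α * m * hb * cb / ρs ≤ K ∧ n < γ)) := by
  have ha : 0 < s * ρs / (e * hb) := by positivity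
  obtain ⟨γ, hγ, h⟩ := le_core (α * hb) (s * ρs / (e * hb)) K
    ((s * ρs / (e * hb)) * m * cb / ρs) T (by positivity) ha hK (by positivity) hT
  set a := s * ρs / (e * hb) with had
  refine ⟨γ * (T * ρs) / (α * a * cb * hb), by positivity, fun n hn => ?_⟩
  have hb' : 0 < α * a * n * cb * hb / (T * ρs) := by positivity
  have e1 : (α * hb * (a * m * cb / ρs) ≤ a * K) ↔ α * m * hb * cb / ρs ≤ K := by
    have : α * hb * (a * m * cb / ρs) = a * (α * m * hb * cb / ρs) := by ring
    rw [this]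
    exact mul_le_mul_iff_right₀ ha
  have e2 : (α * a * n * cb * hb / (T * ρs) < γ) ↔ n < γ * (T * ρs) / (α * a * cb * hb) := by
    rw [div_lt_iff₀ (by positivity), lt_div_iff₀ (by positivity)]
    have : α * a * n * cb * hb = n * (α * a * cb * hb) := by ring
    rw [this]
  rw [← e1, ← e2, ← h _ hb']
  constructor
  · intro hs q ξ hq hξ z hz
    have hη : ξ ^ 2 + √(q - ξ ^ 2) ^ 2 = q := by
      rw [Real.sq_sqrt (by linarith)]; ring
    have hne : (ξ, √(q - ξ ^ 2)) ≠ (0, 0) := by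
      intro h0
      rw [Prod.mk.injEq] at h0
      rw [h0.2, h0.1] at hη
      norm_num at hη
      linarith
    have := hs ξ (√(q - ξ ^ 2)) hne (z - Complex.I * ξ * T) (by
      rw [le_charpoly α hb cb ρs s e m n T K _ _ hhb hρs he hT, hη, sub_add_cancel]
      exact hz)
    simpa using this
  · intro hs ξ η hne z hz
    rw [le_charpoly α hb cb ρs s e m n T K _ _ hhb hρs he hT] at hz
    have hq : 0 < ξ ^ 2 + η ^ 2 := by
      by_contra hc
      apply hne
      have h1 : ξ = 0 := by nlinarith [sq_nonneg ξ, sq_nonneg η]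
      have h2 : η = 0 := by nlinarith [sq_nonneg ξ, sq_nonneg η]
      rw [h1, h2]
    have := hs _ ξ hq (by nlinarith [sq_nonneg η]) _ hz
    simpa using this
end

section
/- Fix positive reals α, h̄, c̄, ρ̄_s, s, e, m, n, T = tanθ, and assume K = 0 and n ≤ m. Then for every frequency (ξ,η) ∈ ℝ² \ {(0,0)}, the matrix A(ξ,η) has at least one eigenvalue with nonnegative real part; i.e. the linearized system is spectrally unstable at every nonzero frequency. -/
theorem root_of_minors (A : Matrix (Fin 3) (Fin 3) ℂ) (u v w : ℝ)
    (h0 : A.det = Complex.I * (u : ℂ))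
    (h1 : A 0 0 * A 1 1 - A 0 1 * A 1 0 + (A 0 0 * A 2 2 - A 0 2 * A 2 0)
      + (A 1 1 * A 2 2 - A 1 2 * A 2 1) = (w : ℂ) + Complex.I * (v : ℂ))
    (huv : 0 ≤ u * v) : ∃ z : ℂ, A.charpoly.IsRoot z ∧ 0 ≤ z.re := by
  by_contra hcon
  push Not at hcon
  have hsp : A.charpoly.Splits := IsAlgClosed.splits _
  have hcard : A.charpoly.roots.card = 3 := by
    rw [← hsp.natDegree_eq_card_roots, Matrix.charpoly_natDegree_eq_dim]; simp
  obtain ⟨x, y, z, hr⟩ := Multiset.card_eq_three.1 hcard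
  have hprod := hsp.eq_prod_roots_of_monic A.charpoly_monic
  have hne : A.charpoly ≠ 0 := A.charpoly_monic.ne_zero
  have hx := hcon x ((Polynomial.mem_roots hne).1 (by rw [hr]; simp))
  have hy := hcon y ((Polynomial.mem_roots hne).1 (by rw [hr]; simp))
  have hz := hcon z ((Polynomial.mem_roots hne).1 (by rw [hr]; simp))
  have hev : ∀ t : ℂ, (Matrix.scalar (Fin 3) t - A).det = (t - x) * (t - y) * (t - z) := by
    intro t
    rw [← Matrix.eval_charpoly, hprod, hr]
    simp [mul_assoc]
  have e0 := hev 0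
  have e1 := hev 1
  have e2 := hev (-1)
  rw [Matrix.det_fin_three] at e0 e1 e2 h0
  simp at e0 e1 e2
  have hd : x * y * z = Complex.I * (u : ℂ) := by rw [← h0]; linear_combination e0
  have hm : x * y + y * z + z * x = (w : ℂ) + Complex.I * (v : ℂ) := by
    rw [← h1]; linear_combination (e2 - e1) / 2
  have key : ((x * y + y * z + z * x) * (starRingEnd ℂ) (x * y * z)).re
      = Complex.normSq x * Complex.normSq y * z.re + Complex.normSq y * Complex.normSq z * x.re
        + Complex.normSq z * Complex.normSq x * y.re := by
    simp [Complex.normSq_apply]; ring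
  rw [hd, hm] at key
  simp at key
  have px : 0 < Complex.normSq x := Complex.normSq_pos.2 (by rintro rfl; simp at hx)
  have py : 0 < Complex.normSq y := Complex.normSq_pos.2 (by rintro rfl; simp at hy)
  have pz : 0 < Complex.normSq z := Complex.normSq_pos.2 (by rintro rfl; simp at hz)
  have q1 := mul_neg_of_pos_of_neg (mul_pos px py) hz
  have q2 := mul_neg_of_pos_of_neg (mul_pos py pz) hx
  have q3 := mul_neg_of_pos_of_neg (mul_pos pz px) hy
  nlinarith

/-- When `K = 0` and `n ≤ m`, the linearized system is spectrally unstable at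
every nonzero frequency: `A(ξ,η)` has an eigenvalue with nonnegative real
part. -/
theorem spectral_instability_no_creep_n_le_m (α hb cb ρs s e m n T : ℝ)
    (hα : 0 < α) (hhb : 0 < hb) (hcb : 0 < cb) (hρs : 0 < ρs)
    (hs : 0 < s) (he : 0 < e) (hm : 0 < m) (hn : 0 < n) (hT : 0 < T)
    (hnm : n ≤ m) :
    ∀ ξ η : ℝ, (ξ, η) ≠ (0, 0) →
      ∃ z : ℂ, (landA α hb cb ρs s e m n T 0 ξ η).charpoly.IsRoot z ∧
        0 ≤ z.re := by
  intro ξ η _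
  have ha : 0 < s * ρs / (e * hb) := by positivity
  unfold landA
  generalize s * ρs / (e * hb) = a at ha
  have hT' : (T : ℂ) ≠ 0 := by exact_mod_cast hT.ne'
  have hh' : (hb : ℂ) ≠ 0 := by exact_mod_cast hhb.ne'
  have hr' : (ρs : ℂ) ≠ 0 := by exact_mod_cast hρs.ne'
  have hI : Complex.I ^ 2 = -1 := Complex.I_sq
  have hI3 : Complex.I ^ 3 = -Complex.I := Complex.I_pow_three
  apply root_of_minors _ (ξ * T * (a * α * cb * hb / ρs * (m * (ξ ^ 2 + η ^ 2) - n * ξ ^ 2)))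
    (ξ * T * (a + α * hb * (ξ ^ 2 + η ^ 2)))
    (a * (α * hb * (ξ ^ 2 + η ^ 2)) - ξ ^ 2 * T ^ 2
      - a * m * cb * α * hb * (ξ ^ 2 + η ^ 2) / ρs + 2 * ξ ^ 2 * (α * a * n * cb * hb / ρs))
  · rw [Matrix.det_fin_three]
    simp
    field_simp
    ring_nf
    simp only [hI, hI3]
    ring
  · simp
    field_simp
    ring_nf
    simp only [hI, hI3]
    ring
  · have h1 : 0 ≤ m * (ξ ^ 2 + η ^ 2) - n * ξ ^ 2 := by
      nlinarith [mul_nonneg (sub_nonneg.2 hnm) (sq_nonneg ξ), mul_nonneg hm.le (sq_nonneg η)]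
    have h2 : 0 ≤ (ξ * T) ^ 2 * (a * α * cb * hb / ρs * (m * (ξ ^ 2 + η ^ 2) - n * ξ ^ 2))
      * (a + α * hb * (ξ ^ 2 + η ^ 2)) := by positivity
    linarith
end

section
/- Let c > 0 and α h̄ > 0 be real numbers, define f : [0, c) → ℝ by f(K) = K·(α h̄ + K − c)² / (c − K), and set d := max(0, c − α h̄). Then f is strictly increasing and strictly positive on the open interval (d, c), f(K) → 0 as K → d⁺ (and f(d) = 0), f(K) → +∞ as K → c⁻, and consequently for every y > 0 there is a unique K ∈ (d, c) with f(K) = y. -/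
open Filter Set

/-- Properties of the threshold function `f(K) = K(αh̄ + K − c)²/(c − K)`
governing low-frequency stability: with `d = max(0, c − αh̄)`, `f` is strictly
increasing and strictly positive on `(d, c)`, tends to `0` as `K → d⁺` (with
`f(d) = 0`), tends to `+∞` as `K → c⁻`, and every `y > 0` is attained exactly
once on `(d, c)`. Here `A` stands for `α h̄ > 0`. -/
theorem threshold_function_properties (c A : ℝ) (hc : 0 < c) (hA : 0 < A) :
    StrictMonoOn (fun K : ℝ => K * (A + K - c) ^ 2 / (c - K))
        (Ioo (max 0 (c - A)) c) ∧
    (∀ K ∈ Ioo (max 0 (c - A)) c, 0 < K * (A + K - c) ^ 2 / (c - K)) ∧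
    Tendsto (fun K : ℝ => K * (A + K - c) ^ 2 / (c - K))
        (nhdsWithin (max 0 (c - A)) (Ioi (max 0 (c - A)))) (nhds 0) ∧
    (max 0 (c - A)) * (A + (max 0 (c - A)) - c) ^ 2 / (c - (max 0 (c - A))) = 0 ∧
    Tendsto (fun K : ℝ => K * (A + K - c) ^ 2 / (c - K))
        (nhdsWithin c (Iio c)) atTop ∧
    (∀ y : ℝ, 0 < y → ∃! K : ℝ,
        K ∈ Ioo (max 0 (c - A)) c ∧ K * (A + K - c) ^ 2 / (c - K) = y) := by
  set d := max 0 (c - A) with hd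
  have hd0 : 0 ≤ d := le_max_left _ _
  have hdA : c - A ≤ d := le_max_right _ _
  have hdc : d < c := max_lt hc (by linarith)
  have hfd : d * (A + d - c) ^ 2 / (c - d) = 0 := by
    rcases max_choice 0 (c - A) with h | h
    · rw [← hd] at h
      rw [h]; simp
    · rw [← hd] at h
      have : A + d - c = 0 := by rw [h]; ring
      rw [this]; simp
  have hmono : StrictMonoOn (fun K : ℝ => K * (A + K - c) ^ 2 / (c - K)) (Ioo d c) := by
    rintro x ⟨hx1, hx2⟩ y ⟨hy1, hy2⟩ hxy
    have h1 : 0 < c - y := by linarith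
    have h2 : 0 < A + x - c := by linarith
    have h3 : 0 < x := by linarith
    have h4 : x * (A + x - c) ^ 2 < y * (A + y - c) ^ 2 := by
      have h5 : (A + x - c) ^ 2 < (A + y - c) ^ 2 :=
        pow_lt_pow_left₀ (by linarith) h2.le (by norm_num)
      exact mul_lt_mul'' hxy h5 h3.le (by positivity)
    exact div_lt_div₀ h4 (by linarith) (by
      have : 0 < y := by linarith
      positivity) h1
  have hcont : ∀ x, x < c → ContinuousAt (fun K : ℝ => K * (A + K - c) ^ 2 / (c - K)) x := by
    intro x hx
    have : c - x ≠ 0 := by linarith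
    fun_prop (disch := assumption)
  have htop : Tendsto (fun K : ℝ => K * (A + K - c) ^ 2 / (c - K))
      (nhdsWithin c (Iio c)) atTop := by
    have h1 : Tendsto (fun K : ℝ => K * (A + K - c) ^ 2) (nhdsWithin c (Iio c))
        (nhds (c * (A + c - c) ^ 2)) :=
      ((by fun_prop : Continuous (fun K : ℝ => K * (A + K - c) ^ 2)).tendsto c).mono_left
        nhdsWithin_le_nhds
    have h2 : Tendsto (fun K : ℝ => c - K) (nhdsWithin c (Iio c)) (nhdsWithin 0 (Ioi 0)) := by
      apply tendsto_nhdsWithin_of_tendsto_nhds_of_eventually_within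
      · have := ((by fun_prop : Continuous (fun K : ℝ => c - K)).tendsto c).mono_left
          (nhdsWithin_le_nhds (s := Iio c))
        simpa using this
      · filter_upwards [self_mem_nhdsWithin] with K hK
        exact mem_Ioi.2 (sub_pos.2 (mem_Iio.1 hK))
    have h3 := h1.pos_mul_atTop (by rw [add_sub_cancel_right]; positivity)
      h2.inv_tendsto_nhdsGT_zero
    simpa only [div_eq_mul_inv, Pi.inv_apply] using h3
  refine ⟨hmono, ?_, ?_, hfd, htop, ?_⟩
  · rintro K ⟨h1, h2⟩
    have h3 : 0 < c - K := by linarith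
    have h4 : 0 < A + K - c := by linarith
    have h5 : 0 < K := by linarith
    positivity
  · have := (hcont d hdc).tendsto.mono_left (nhdsWithin_le_nhds (s := Ioi d))
    simpa only [hfd] using this
  · intro y hy
    obtain ⟨b, hb, hbd, hbc⟩ := ((htop.eventually_gt_atTop y).and
      (Ioo_mem_nhdsLT hdc)).exists
    have hiv := intermediate_value_Ioo (f := fun K : ℝ => K * (A + K - c) ^ 2 / (c - K))
      hbd.le (fun x hx => (hcont x (lt_of_le_of_lt hx.2 hbc)).continuousWithinAt)
    obtain ⟨K, hK, hKy⟩ := hiv ⟨by simpa only [hfd] using hy, hb⟩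
    have hKm : K ∈ Ioo d c := ⟨hK.1, hK.2.trans hbc⟩
    refine ⟨K, ⟨hKm, hKy⟩, ?_⟩
    rintro L ⟨hL, hLy⟩
    exact hmono.injOn hL hKm (hLy.trans hKy.symm)
end

section
/- Let η̄ > 0, ξ̄ ∈ ℝ, K̄ ≥ 0 and μ > 0 be real numbers, set β := 1 + K̄ − μ, and consider the complex quadratic polynomial p(z) = z² + (η̄² β − i ξ̄)·z + (η̄⁴ K̄ − i ξ̄ η̄²). Then both roots of p have strictly negative real part if and only if β > 0 and η̄⁴ K̄ β² > ξ̄² (μ − K̄). -/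
/-- Low-frequency dispersion relation: both roots of the complex quadratic
`p(z) = z² + (η̄²β − iξ̄)z + (η̄⁴K̄ − iξ̄η̄²)`, with `β = 1 + K̄ − μ`, have
strictly negative real part iff `β > 0` and `η̄⁴ K̄ β² > ξ̄² (μ − K̄)`. -/
theorem low_frequency_quadratic_stability (ηb ξb Kb μ β : ℝ)
    (hηb : 0 < ηb) (hKb : 0 ≤ Kb) (hμ : 0 < μ) (hβ : β = 1 + Kb - μ) :
    (∀ z : ℂ,
        z ^ 2 + (((ηb ^ 2 * β : ℝ) : ℂ) - (ξb : ℂ) * Complex.I) * z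
          + (((ηb ^ 4 * Kb : ℝ) : ℂ) - (ξb : ℂ) * ((ηb ^ 2 : ℝ) : ℂ) * Complex.I)
          = 0 → z.re < 0) ↔
      (0 < β ∧ ξb ^ 2 * (μ - Kb) < ηb ^ 4 * Kb * β ^ 2) := by
  have hex : ∀ B C : ℂ, ∃ z w : ℂ, B = -(z + w) ∧ C = z * w := by
    intro B C
    obtain ⟨s, hs⟩ := IsAlgClosed.exists_eq_mul_self (B ^ 2 - 4 * C)
    refine ⟨(-B + s) / 2, (-B - s) / 2, by ring, ?_⟩
    linear_combination (-1 / 4 : ℂ) * hs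
  obtain ⟨z, w, hB, hC⟩ := hex (((ηb ^ 2 * β : ℝ) : ℂ) - (ξb : ℂ) * Complex.I)
    (((ηb ^ 4 * Kb : ℝ) : ℂ) - (ξb : ℂ) * ((ηb ^ 2 : ℝ) : ℂ) * Complex.I)
  rw [hB, hC]
  have h1 := congrArg Complex.re hB
  have h2 := congrArg Complex.im hB
  have h3 := congrArg Complex.re hC
  have h4 := congrArg Complex.im hC
  simp only [Complex.sub_re, Complex.sub_im, Complex.add_re, Complex.add_im, Complex.neg_re,
    Complex.neg_im, Complex.mul_re, Complex.mul_im, Complex.ofReal_re, Complex.ofReal_im,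
    Complex.I_re, Complex.I_im, mul_zero, zero_mul, mul_one, sub_zero, add_zero, zero_add,
    zero_sub] at h1 h2 h3 h4
  have hroots : (∀ v : ℂ, v ^ 2 + -(z + w) * v + z * w = 0 → v.re < 0) ↔
      (z.re < 0 ∧ w.re < 0) := by
    constructor
    · intro h
      exact ⟨h z (by ring), h w (by ring)⟩
    · rintro ⟨hz, hw⟩ v hv
      have : (v - z) * (v - w) = 0 := by linear_combination hv
      rcases mul_eq_zero.mp this with h | h
      · rw [sub_eq_zero.mp h]; exact hz
      · rw [sub_eq_zero.mp h]; exact hw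
  rw [hroots]
  generalize z.re = a at *
  generalize w.re = b at *
  generalize z.im = c at *
  generalize w.im = d at *
  have hη2 : 0 < ηb ^ 2 := by positivity
  have hη4 : 0 < ηb ^ 4 := by positivity
  have key : ηb ^ 4 * (ηb ^ 4 * Kb * β ^ 2 - ξb ^ 2 * (μ - Kb))
      = a * b * ((a + b) ^ 2 + (c - d) ^ 2) := by
    have e : ηb ^ 4 * (ηb ^ 4 * Kb * β ^ 2 - ξb ^ 2 * (μ - Kb)) =
      (ηb ^ 2 * β) * (-ξb) * (-(ξb * ηb ^ 2)) + (ηb ^ 2 * β) ^ 2 * (ηb ^ 4 * Kb)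
        - (-(ξb * ηb ^ 2)) ^ 2 := by
      rw [hβ]; ring
    rw [e, h1, h2, h3, h4]; ring
  constructor
  · rintro ⟨ha, hb⟩
    have hab : 0 < a * b := mul_pos_of_neg_of_neg ha hb
    have hs : 0 < (a + b) ^ 2 + (c - d) ^ 2 := by
      have : 0 < (a + b) ^ 2 := by nlinarith
      positivity
    have hp := mul_pos hab hs
    rw [← key] at hp
    refine ⟨?_, ?_⟩
    · refine pos_of_mul_pos_right (a := ηb ^ 2) ?_ hη2.le
      linarith
    · have := pos_of_mul_pos_right hp hη4.le
      linarith
  · rintro ⟨hb0, hlt⟩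
    have hp : 0 < ηb ^ 4 * (ηb ^ 4 * Kb * β ^ 2 - ξb ^ 2 * (μ - Kb)) :=
      mul_pos hη4 (by linarith)
    rw [key] at hp
    have hab : 0 < a * b := pos_of_mul_pos_left hp (by positivity)
    have hsum : 0 < ηb ^ 2 * β := mul_pos hη2 hb0
    rcases mul_pos_iff.mp hab with ⟨h, h'⟩ | h
    · linarith
    · exact h
end

section
/- Fix positive reals α, h̄, c̄, ρ̄_s, s, e, m, n, T = tanθ, assume K = 0, and let η ≠ 0 be real. Then 0 is an eigenvalue of A(0,η), and A(0,η) has an eigenvalue with strictly positive real part if and only if m·c̄ > ρ̄_s. -/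
theorem landA_root_iff (α hb cb ρs s e m n T η : ℝ) (hhb : hb ≠ 0) (hρs : ρs ≠ 0) (z : ℂ) :
    (landA α hb cb ρs s e m n T 0 0 η).charpoly.IsRoot z ↔
      z * (z ^ 2 + ((α * hb * η ^ 2 + s * ρs / (e * hb) : ℝ) : ℂ) * z
        + (((α * hb * η ^ 2) * (s * ρs / (e * hb)) * (1 - m * cb / ρs) : ℝ) : ℂ)) = 0 := by
  unfold Polynomial.IsRoot
  rw [Matrix.eval_charpoly]
  unfold landA
  generalize s * ρs / (e * hb) = a
  have h1 : (hb : ℂ) ≠ 0 := by exact_mod_cast hhb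
  have h2 : (ρs : ℂ) ≠ 0 := by exact_mod_cast hρs
  rw [Matrix.det_fin_three]
  apply Eq.congr_left
  simp [Matrix.scalar_apply]
  field_simp
  ring

/-- When `K = 0` and `η ≠ 0`, `0` is an eigenvalue of `A(0,η)`, and `A(0,η)`
has an eigenvalue with strictly positive real part iff `m c̄ > ρ̄ₛ`. -/
theorem transverse_no_creep_instability (α hb cb ρs s e m n T : ℝ)
    (hα : 0 < α) (hhb : 0 < hb) (hcb : 0 < cb) (hρs : 0 < ρs)
    (hs : 0 < s) (he : 0 < e) (hm : 0 < m) (hn : 0 < n) (hT : 0 < T)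
    (η : ℝ) (hη : η ≠ 0) :
    (landA α hb cb ρs s e m n T 0 0 η).charpoly.IsRoot 0 ∧
    ((∃ z : ℂ, (landA α hb cb ρs s e m n T 0 0 η).charpoly.IsRoot z ∧
        0 < z.re) ↔ m * cb > ρs) := by
  have ha : 0 < s * ρs / (e * hb) := by positivity
  have hq : 0 < α * hb * η ^ 2 := by positivity
  simp only [landA_root_iff α hb cb ρs s e m n T η hhb.ne' hρs.ne']
  generalize s * ρs / (e * hb) = a at *
  generalize α * hb * η ^ 2 = q at *
  have hb_iff : q * a * (1 - m * cb / ρs) < 0 ↔ m * cb > ρs := by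
    have hqa : 0 < q * a := mul_pos hq ha
    rw [gt_iff_lt, ← one_lt_div hρs]
    constructor
    · intro h
      by_contra! h'
      nlinarith [mul_nonneg hqa.le (sub_nonneg.mpr h')]
    · intro h
      exact mul_neg_of_pos_of_neg hqa (sub_neg.mpr h)
  rw [← hb_iff]
  generalize q * a * (1 - m * cb / ρs) = b
  have hp : 0 < q + a := add_pos hq ha
  generalize q + a = p at *
  refine ⟨by simp, ?_, ?_⟩
  · rintro ⟨z, hz, hre⟩
    rcases mul_eq_zero.mp hz with h | h
    · simp [h] at hre
    · have e1 := congrArg Complex.re h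
      have e2 := congrArg Complex.im h
      simp [pow_two] at e1 e2
      have h3 : z.im * (2 * z.re + p) = 0 := by linarith
      have h4 : z.im = 0 := by
        rcases mul_eq_zero.mp h3 with h | h
        · exact h
        · linarith
      rw [h4] at e1
      nlinarith [mul_pos hp hre, mul_pos hre hre]
  · intro hb0
    have hd : 0 ≤ p ^ 2 - 4 * b := by nlinarith [sq_nonneg p]
    have hs2 := Real.sq_sqrt hd
    have hlt : p < Real.sqrt (p ^ 2 - 4 * b) := by
      apply Real.lt_sqrt_of_sq_lt
      linarith
    refine ⟨(((-p + Real.sqrt (p ^ 2 - 4 * b)) / 2 : ℝ) : ℂ), ?_, ?_⟩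
    · norm_cast
      rw [mul_eq_zero]
      right
      linear_combination hs2 / 4
    · rw [Complex.ofReal_re]
      linarith
end

section
/- Fix positive reals α, h̄, c̄, ρ̄_s, s, e, m, n, T = tanθ and assume K > 0. Then there exists R > 0 such that for every (ξ,η) ∈ ℝ² with ξ² + η² ≥ R, every eigenvalue of A(ξ,η) has strictly negative real part. In particular, the set of frequencies at which the linearized system is spectrally unstable is bounded. -/
theorem land_aux (q a b1 B b2 b3 D T K ξ p : ℝ) (hq : 0 < q) (ha : 0 < a) (hb1 : 0 ≤ b1)
    (hB : 0 ≤ B) (hb2 : 0 ≤ b2) (hb3 : 0 ≤ b3) (hD : 0 ≤ D)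
    (hp : 0 < p) (z u v w : ℂ) (hz : 0 ≤ z.re)
    (h1 : (z + Complex.I * ξ * T + p * q) * u = -(p * q * w))
    (h2 : (z + a + Complex.I * ξ * T) * v = (b1 - Complex.I * ξ * B) * u - Complex.I * ξ * B * w)
    (h3 : (z + p * K) * w = (-b2 + Complex.I * ξ * D) * u + b3 * v + Complex.I * ξ * D * w)
    (hne : ¬ (u = 0 ∧ v = 0 ∧ w = 0)) :
    K * p ≤ (b2 + b3 * (b1 / a)) + (2 * D + b3 * (2 * B / a)) * |ξ| := by
  have hx : 0 ≤ |ξ| := abs_nonneg ξ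
  have nI : ∀ r : ℝ, 0 ≤ r → ‖Complex.I * (ξ : ℂ) * (r : ℂ)‖ = |ξ| * r := by
    intro r hr
    simp [abs_of_nonneg hr]
  have hpq : 0 < p * q := mul_pos hp hq
  have e1 : ‖u‖ ≤ ‖w‖ := by
    have l : p * q ≤ ‖z + Complex.I * ξ * T + p * q‖ := by
      refine le_trans ?_ (Complex.re_le_norm _)
      simp
      linarith
    have h := congrArg norm h1
    rw [norm_mul, norm_neg, norm_mul, norm_mul, Complex.norm_real, Complex.norm_real,
      Real.norm_of_nonneg hp.le, Real.norm_of_nonneg hq.le] at h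
    have := mul_le_mul_of_nonneg_right l (norm_nonneg u)
    rw [h] at this
    exact le_of_mul_le_mul_left this hpq
  have e2 : ‖v‖ ≤ (b1 / a + 2 * B / a * |ξ|) * ‖w‖ := by
    have l : a ≤ ‖z + a + Complex.I * ξ * T‖ := by
      refine le_trans ?_ (Complex.re_le_norm _)
      simp
      linarith
    have h := congrArg norm h2
    rw [norm_mul] at h
    have h4 := mul_le_mul_of_nonneg_right l (norm_nonneg v)
    rw [h] at h4
    have h5 := norm_sub_le ((b1 - Complex.I * ξ * B) * u) (Complex.I * ξ * B * w)
    have h6 := norm_sub_le (b1 : ℂ) (Complex.I * ξ * B)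
    rw [norm_mul, norm_mul _ w, nI B hB] at h5
    rw [nI B hB, Complex.norm_real, Real.norm_of_nonneg hb1] at h6
    have h7 : ‖(b1 : ℂ) - Complex.I * ξ * B‖ * ‖u‖ ≤ (b1 + |ξ| * B) * ‖w‖ :=
      mul_le_mul h6 e1 (norm_nonneg _) (by positivity)
    have h8 : a * ‖v‖ ≤ a * ((b1 / a + 2 * B / a * |ξ|) * ‖w‖) := by
      have : a * ((b1 / a + 2 * B / a * |ξ|) * ‖w‖) = (b1 + 2 * B * |ξ|) * ‖w‖ := by
        field_simp
      rw [this]; linarith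
    exact le_of_mul_le_mul_left h8 ha
  have hw : 0 < ‖w‖ := by
    rw [norm_pos_iff]
    rintro rfl
    simp only [norm_zero, mul_zero] at e1 e2
    exact hne ⟨norm_le_zero_iff.1 e1, norm_le_zero_iff.1 e2, rfl⟩
  have l : K * p ≤ ‖z + p * K‖ := by
    refine le_trans ?_ (Complex.re_le_norm _)
    simp
    linarith
  have h := congrArg norm h3
  rw [norm_mul] at h
  have h4 := mul_le_mul_of_nonneg_right l (norm_nonneg w)
  rw [h] at h4
  have h5 := norm_add₃_le (a := (-b2 + Complex.I * ξ * D) * u) (b := b3 * v)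
    (c := Complex.I * ξ * D * w)
  have h6 := norm_add_le (-b2 : ℂ) (Complex.I * ξ * D)
  rw [norm_mul, norm_mul _ v, norm_mul _ w, nI D hD, Complex.norm_real,
    Real.norm_of_nonneg hb3] at h5
  rw [nI D hD, norm_neg, Complex.norm_real, Real.norm_of_nonneg hb2] at h6
  have h7 : ‖(-b2 : ℂ) + Complex.I * ξ * D‖ * ‖u‖ ≤ (b2 + |ξ| * D) * ‖w‖ :=
    mul_le_mul h6 e1 (norm_nonneg _) (by positivity)
  have h8 := mul_le_mul_of_nonneg_left e2 hb3
  refine le_of_mul_le_mul_right ?_ hw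
  linarith

/-- For `K > 0`, all eigenvalues of `A(ξ,η)` have strictly negative real part
once `ξ² + η²` is large enough; in particular the set of spectrally unstable
frequencies is bounded. -/
theorem high_frequency_stability_creep_pos (α hb cb ρs s e m n T K : ℝ)
    (hα : 0 < α) (hhb : 0 < hb) (hcb : 0 < cb) (hρs : 0 < ρs)
    (hs : 0 < s) (he : 0 < e) (hm : 0 < m) (hn : 0 < n) (hT : 0 < T)
    (hK : 0 < K) :
    ∃ R : ℝ, 0 < R ∧
      (∀ ξ η : ℝ, R ≤ ξ ^ 2 + η ^ 2 →
        ∀ z : ℂ, (landA α hb cb ρs s e m n T K ξ η).charpoly.IsRoot z →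
          z.re < 0) ∧
      Bornology.IsBounded {p : ℝ × ℝ | ∃ z : ℂ,
        (landA α hb cb ρs s e m n T K p.1 p.2).charpoly.IsRoot z ∧ 0 ≤ z.re} := by
  have key : ∃ R : ℝ, 0 < R ∧
      (∀ ξ η : ℝ, R ≤ ξ ^ 2 + η ^ 2 →
        ∀ z : ℂ, (landA α hb cb ρs s e m n T K ξ η).charpoly.IsRoot z →
          z.re < 0) := by
    obtain ⟨a, ha⟩ : ∃ a, a = s * ρs / (e * hb) := ⟨_, rfl⟩
    have ha0 : 0 < a := by rw [ha]; positivity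
    obtain ⟨b1, hb1⟩ : ∃ x, x = a * m * cb / hb := ⟨_, rfl⟩
    obtain ⟨B, hB⟩ : ∃ x, x = α * a * n * cb / T := ⟨_, rfl⟩
    obtain ⟨b2, hb2⟩ : ∃ x, x = a * m * cb / ρs := ⟨_, rfl⟩
    obtain ⟨b3, hb3⟩ : ∃ x, x = a * hb / ρs := ⟨_, rfl⟩
    obtain ⟨D, hD⟩ : ∃ x, x = α * a * n * hb * cb / (ρs * T) := ⟨_, rfl⟩
    obtain ⟨q, hq⟩ : ∃ x, x = α * hb := ⟨_, rfl⟩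
    have hb10 : 0 < b1 := by rw [hb1]; positivity
    have hB0 : 0 < B := by rw [hB]; positivity
    have hb20 : 0 < b2 := by rw [hb2]; positivity
    have hb30 : 0 < b3 := by rw [hb3]; positivity
    have hD0 : 0 < D := by rw [hD]; positivity
    have hq0 : 0 < q := by rw [hq]; positivity
    obtain ⟨C1, hC1⟩ : ∃ x, x = b2 + b3 * (b1 / a) := ⟨_, rfl⟩
    obtain ⟨C2, hC2⟩ : ∃ x, x = 2 * D + b3 * (2 * B / a) := ⟨_, rfl⟩
    have hC10 : 0 < C1 := by rw [hC1]; positivity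
    have hC20 : 0 < C2 := by rw [hC2]; positivity
    refine ⟨2 / K * (C1 + C2 ^ 2 / (2 * K)) + 1, by positivity, ?_⟩
    intro ξ η hR z hz
    by_contra hneg
    push Not at hneg
    have hp : 0 < ξ ^ 2 + η ^ 2 := lt_of_lt_of_le (by positivity) hR
    rw [Polynomial.IsRoot, Matrix.eval_charpoly] at hz
    obtain ⟨x, hx0, hx⟩ := Matrix.exists_mulVec_eq_zero_iff.2 hz
    have r0 := congrFun hx 0
    have r1 := congrFun hx 1
    have r2 := congrFun hx 2
    unfold landA at r0 r1 r2
    rw [← ha, ← hb1, ← hB, ← hb2, ← hb3, ← hD, ← hq] at r0 r1 r2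
    simp [Matrix.mulVec, dotProduct, Fin.sum_univ_three] at r0 r1 r2
    have hfin := land_aux q a b1 B b2 b3 D T K ξ (ξ ^ 2 + η ^ 2) hq0 ha0 hb10.le hB0.le hb20.le
      hb30.le hD0.le hp z (x 0) (x 1) (x 2) hneg
      (by push_cast; linear_combination r0) (by push_cast; linear_combination r1)
      (by push_cast; linear_combination r2)
      (by
        rintro ⟨h0, h1, h2⟩
        apply hx0
        funext i
        fin_cases i <;> assumption)
    rw [← hC1, ← hC2] at hfin
    have hy : C2 * |ξ| ≤ K / 2 * ξ ^ 2 + C2 ^ 2 / (2 * K) := by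
      rw [← sq_abs ξ]
      have : K / 2 * |ξ| ^ 2 + C2 ^ 2 / (2 * K) - C2 * |ξ| = (K * |ξ| - C2) ^ 2 / (2 * K) := by
        field_simp
        ring
      have h2 : 0 ≤ (K * |ξ| - C2) ^ 2 / (2 * K) := by positivity
      linarith
    have hR2 := mul_le_mul_of_nonneg_left hR (show 0 ≤ K / 2 by positivity)
    have e : K / 2 * (2 / K * (C1 + C2 ^ 2 / (2 * K)) + 1) = C1 + C2 ^ 2 / (2 * K) + K / 2 := by
      field_simp
    rw [e] at hR2
    have : 0 ≤ K / 2 * η ^ 2 := by positivity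
    nlinarith
  obtain ⟨R, hR, h⟩ := key
  refine ⟨R, hR, h, ?_⟩
  refine (Metric.isBounded_closedBall (x := (0 : ℝ × ℝ)) (r := R + 1)).subset ?_
  rintro ⟨ξ, η⟩ ⟨z, hz, hz0⟩
  have hlt : ξ ^ 2 + η ^ 2 < R := by
    by_contra hc
    push Not at hc
    exact absurd (h ξ η hc z hz) (not_lt.2 hz0)
  rw [mem_closedBall_zero_iff, Prod.norm_mk, Real.norm_eq_abs, Real.norm_eq_abs]
  refine max_le (abs_le.2 ⟨?_, ?_⟩) (abs_le.2 ⟨?_, ?_⟩) <;>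
    nlinarith [sq_nonneg ξ, sq_nonneg η, sq_nonneg (ξ - 1), sq_nonneg (η - 1),
      sq_nonneg (ξ + 1), sq_nonneg (η + 1)]
end
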